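/- For every formal Laurent series u in q with integer coefficients and every integer j, U_7(u·t^j) = ∑_{l=0}^{6} a_l(t)·U_7(u·t^{j+l−7}). -/

import Mathlib

noncomputable section

/-- `J b = ∏_{k=1}^∞ (1 - q^{b·k})` as a formal power series with integer coefficients. -/
def J (b : ℕ) : PowerSeries ℤ :=
  PowerSeries.mk fun n =>
    PowerSeries.coeff n
      (∏ k ∈ Finset.range (n + 1), (1 - (PowerSeries.X : PowerSeries ℤ) ^ (b * (k + 1))))

/-- The polynomials `a_0, …, a_6` of Theorem 2.6 (evaluated at `x`). -/
def aPoly {R : Type*} [CommRing R] (l : ℕ) (x : R) : R :=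
  match l with
  | 0 => x
  | 1 => 7 ^ 2 * x ^ 2 + 4 * 7 * x
  | 2 => 7 ^ 4 * x ^ 3 + 4 * 7 ^ 3 * x ^ 2 + 46 * 7 * x
  | 3 => 7 ^ 6 * x ^ 4 + 4 * 7 ^ 5 * x ^ 3 + 46 * 7 ^ 3 * x ^ 2 + 272 * 7 * x
  | 4 => 7 ^ 8 * x ^ 5 + 4 * 7 ^ 7 * x ^ 4 + 46 * 7 ^ 5 * x ^ 3 + 272 * 7 ^ 3 * x ^ 2
      + 845 * 7 * x
  | 5 => 7 ^ 10 * x ^ 6 + 4 * 7 ^ 9 * x ^ 5 + 46 * 7 ^ 7 * x ^ 4 + 272 * 7 ^ 5 * x ^ 3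
      + 845 * 7 ^ 3 * x ^ 2 + 176 * 7 ^ 2 * x
  | 6 => 7 ^ 12 * x ^ 7 + 4 * 7 ^ 11 * x ^ 6 + 46 * 7 ^ 9 * x ^ 5 + 272 * 7 ^ 7 * x ^ 4
      + 845 * 7 ^ 5 * x ^ 3 + 176 * 7 ^ 4 * x ^ 2 + 82 * 7 ^ 2 * x
  | _ => 0

/-!
Split `J 1` by exponents mod `7`. Euler's pentagonal series shows that only four parts survive,
`J 1 = α + β + δ - ω` with `ω = X ^ 2 * J 49`. Jacobi's series for `J 1 ^ 3` has exponents which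
avoid `2` and hit `6` in a single way mod `7`, which gives two relations between the parts. The
double series for `J 1 ^ 4` is a sum over norms from `ℤ[√-3]`; its exponents congruent to `1` come
from multiplication by the two elements of norm `7`, which gives a third relation involving `J 7`.
Eliminating the parts from these three relations leaves an equation of degree `7` for
`t = q * J 7 ^ 4 / J 1 ^ 4` over the polynomials in `t(q ^ 7)`, and the operator `U` pulls out
factors that are series in `q ^ 7`.
-/

section WeightedSeries

open PowerSeries

variable {R ι κ : Type*} [CommRing R]

/-- The generating series `∑ i, w i * X ^ e i` of a family with weights `w` and exponents `e`.
It is only meaningful when `e` has finite fibres: `finsum` is `0` on infinite supports. -/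
def weightedSeries (e : ι → ℕ) (w : ι → R) : R⟦X⟧ :=
  PowerSeries.mk fun n => ∑ᶠ i ∈ e ⁻¹' {n}, w i

theorem coeff_weightedSeries (e : ι → ℕ) (w : ι → R) (n : ℕ) :
    coeff n (weightedSeries e w) = ∑ᶠ i ∈ e ⁻¹' {n}, w i :=
  coeff_mk _ _

theorem weightedSeries_add {e : ι → ℕ} (he : ∀ n, (e ⁻¹' {n}).Finite) (w w' : ι → R) :
    weightedSeries e (w + w') = weightedSeries e w + weightedSeries e w' := by
  ext n
  simp only [coeff_weightedSeries, map_add, Pi.add_apply, finsum_mem_add_distrib (he n)]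

theorem weightedSeries_const_mul {e : ι → ℕ} (he : ∀ n, (e ⁻¹' {n}).Finite) (c : R)
    (w : ι → R) : weightedSeries e (fun i => c * w i) = C c * weightedSeries e w := by
  ext n
  rw [coeff_C_mul, coeff_weightedSeries, coeff_weightedSeries, mul_finsum_mem' w c (he n)]

theorem finite_preimage_add {e : ι → ℕ} {e' : κ → ℕ} (he : ∀ n, (e ⁻¹' {n}).Finite)
    (he' : ∀ n, (e' ⁻¹' {n}).Finite) (n : ℕ) :
    ((fun p : ι × κ => e p.1 + e' p.2) ⁻¹' {n}).Finite := by
  refine Set.Finite.subset ((Finset.HasAntidiagonal.antidiagonal n).finite_toSet.biUnion fun d _ =>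
    (he d.1).prod (he' d.2)) fun p hp => ?_
  simp only [Set.mem_iUnion]
  exact ⟨(e p.1, e' p.2), by simpa using hp, by simp⟩

theorem weightedSeries_mul {e : ι → ℕ} {e' : κ → ℕ} (he : ∀ n, (e ⁻¹' {n}).Finite)
    (he' : ∀ n, (e' ⁻¹' {n}).Finite) (w : ι → R) (w' : κ → R) :
    weightedSeries e w * weightedSeries e' w' =
      weightedSeries (fun p : ι × κ => e p.1 + e' p.2) fun p => w p.1 * w' p.2 := by
  classical
  ext n
  have hfin := finite_preimage_add he he' n
  rw [coeff_mul, coeff_weightedSeries, finsum_mem_eq_finite_toFinset_sum _ hfin,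
    ← Finset.sum_fiberwise_of_maps_to (t := Finset.HasAntidiagonal.antidiagonal n)
      (g := fun p : ι × κ => (e p.1, e' p.2)) (by simp)]
  refine Finset.sum_congr rfl fun d hd => ?_
  rw [coeff_weightedSeries, coeff_weightedSeries, finsum_mem_eq_finite_toFinset_sum _ (he d.1),
    finsum_mem_eq_finite_toFinset_sum _ (he' d.2), Finset.sum_mul_sum, ← Finset.sum_product']
  refine Finset.sum_congr ?_ fun _ _ => rfl
  ext p
  rw [Finset.HasAntidiagonal.mem_antidiagonal] at hd
  simp only [Finset.mem_product, Set.Finite.mem_toFinset, Set.mem_preimage, Set.mem_singleton_iff,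
    Finset.mem_filter, Prod.ext_iff]
  omega

theorem weightedSeries_indicator_range (e : ι → ℕ) (w : ι → R) {φ : κ → ι}
    (hφ : φ.Injective) :
    weightedSeries e ((Set.range φ).indicator w) = weightedSeries (e ∘ φ) (w ∘ φ) := by
  ext n
  have hindicator : (e ⁻¹' {n}).indicator ((Set.range φ).indicator w) =
      (Set.range φ).indicator ((e ⁻¹' {n}).indicator w) := by
    rw [Set.indicator_indicator, Set.indicator_indicator, Set.inter_comm]
  rw [coeff_weightedSeries, coeff_weightedSeries, finsum_mem_def, hindicator, ← finsum_mem_def,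
    finsum_mem_range hφ, finsum_mem_def]
  rfl

theorem weightedSeries_comp_equiv (e : ι → ℕ) (w : ι → R) (σ : κ ≃ ι) :
    weightedSeries (e ∘ σ) (w ∘ σ) = weightedSeries e w := by
  rw [← weightedSeries_indicator_range e w σ.injective, σ.range_eq_univ, Set.indicator_univ]

theorem weightedSeries_mul_add {b : ℕ} (hb : b ≠ 0) (k : ℕ) (e : ι → ℕ) (w : ι → R) :
    weightedSeries (fun i => b * e i + k) w = X ^ k * expand b hb (weightedSeries e w) := by
  ext n
  rw [coeff_X_pow_mul', coeff_weightedSeries]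
  split_ifs with hk
  · obtain ⟨m, rfl⟩ := Nat.exists_eq_add_of_le' hk
    rw [Nat.add_sub_cancel]
    by_cases hm : b ∣ m
    · obtain ⟨m, rfl⟩ := hm
      rw [coeff_expand_mul, coeff_weightedSeries]
      refine finsum_mem_congr (Set.ext fun i => ?_) fun _ _ => rfl
      simp [hb]
    · rw [coeff_expand_of_not_dvd _ _ _ hm]
      refine finsum_mem_eq_zero_of_forall_eq_zero fun i hi => absurd ⟨e i, ?_⟩ hm
      simpa [eq_comm] using hi
  · refine finsum_mem_eq_zero_of_forall_eq_zero fun i hi => absurd ?_ hk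
    exact (Nat.le_add_left k _).trans_eq hi

end WeightedSeries

section Component

open PowerSeries

variable {R ι κ : Type*} [CommRing R] (m : ℕ)

/-- The part of a power series supported on the exponents in the residue class `r` mod `m`. -/
def component (r : ZMod m) : R⟦X⟧ →ₗ[R] R⟦X⟧ where
  toFun f := PowerSeries.mk fun n => if (n : ZMod m) = r then coeff n f else 0
  map_add' f g := by ext n; simp only [coeff_mk, map_add]; split_ifs <;> simp
  map_smul' c f := by ext n; simp

variable {m}

theorem coeff_component (r : ZMod m) (f : R⟦X⟧) (n : ℕ) :
    coeff n (component m r f) = if (n : ZMod m) = r then coeff n f else 0 := by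
  simp [component]

theorem sum_component [NeZero m] (f : R⟦X⟧) : ∑ r : ZMod m, component m r f = f := by
  ext n
  simp [coeff_component]

theorem component_mul [NeZero m] (s : ZMod m) (f g : R⟦X⟧) :
    component m s (f * g) = ∑ r, component m r f * component m (s - r) g := by
  ext n
  simp only [coeff_component, coeff_mul, map_sum]
  rw [Finset.sum_comm]
  split_ifs with hn
  · refine Finset.sum_congr rfl fun d hd => ?_
    have hd : (d.1 : ZMod m) + d.2 = s := by
      rw [← hn, ← Finset.HasAntidiagonal.mem_antidiagonal.1 hd, Nat.cast_add]
    rw [Finset.sum_eq_single_of_mem (d.1 : ZMod m) (Finset.mem_univ _)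
      fun r _ hr => by rw [if_neg hr.symm, zero_mul], if_pos rfl, if_pos (by rw [← hd]; ring)]
  · refine (Finset.sum_eq_zero fun d hd => Finset.sum_eq_zero fun r _ => ?_).symm
    have hd : (d.1 : ZMod m) + d.2 ≠ s := by
      rwa [← Nat.cast_add, Finset.HasAntidiagonal.mem_antidiagonal.1 hd]
    split_ifs with h₁ h₂ <;> simp_all

theorem component_weightedSeries (r : ZMod m) (e : ι → ℕ) (w : ι → R) :
    component m r (weightedSeries e w) =
      weightedSeries e ({i | (e i : ZMod m) = r}.indicator w) := by
  ext n
  rw [coeff_component, coeff_weightedSeries, coeff_weightedSeries]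
  split_ifs with hn
  · exact finsum_mem_congr rfl fun i hi => by
      rw [Set.indicator_of_mem]; rw [Set.mem_ofPred_eq, show e i = n from hi, hn]
  · refine (finsum_mem_eq_zero_of_forall_eq_zero fun i hi => Set.indicator_of_notMem ?_ _).symm
    rwa [Set.mem_ofPred_eq, show e i = n from hi]

theorem component_weightedSeries_eq_zero {r : ZMod m} {e : ι → ℕ} (w : ι → R)
    (he : ∀ i, (e i : ZMod m) ≠ r) : component m r (weightedSeries e w) = 0 := by
  rw [component_weightedSeries, Set.eq_empty_of_forall_notMem (s := {i | (e i : ZMod m) = r}) he,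
    Set.indicator_empty]
  ext n
  simp [coeff_weightedSeries]

theorem weightedSeries_indicator_range_mul_add {e : ι → ℕ} {w : ι → R} {φ : κ → ι} {b k : ℕ}
    {e' : κ → ℕ} {w' : κ → R} (hφ : φ.Injective) (hb : b ≠ 0) (he : ∀ i, e (φ i) = b * e' i + k)
    (hw : ∀ i, w (φ i) = w' i) :
    weightedSeries e ((Set.range φ).indicator w) = X ^ k * expand b hb (weightedSeries e' w') := by
  rw [weightedSeries_indicator_range e w hφ, ← weightedSeries_mul_add]
  exact congrArg₂ weightedSeries (funext he) (funext hw)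

end Component

section EulerProduct

open PowerSeries

/-- The finite Euler product `(1 - q) (1 - q ^ 2) ⋯ (1 - q ^ n)`. -/
def eulerProduct {R : Type*} [CommRing R] (q : R) (n : ℕ) : R :=
  ∏ i ∈ Finset.range n, (1 - q ^ (i + 1))

theorem X_pow_dvd_eulerProduct_add_sub (n m : ℕ) :
    (X : ℤ⟦X⟧) ^ (n + 1) ∣ eulerProduct X (n + m) - eulerProduct X n := by
  induction m with
  | zero => simp
  | succ m ih =>
    have hstep : eulerProduct (X : ℤ⟦X⟧) (n + (m + 1)) - eulerProduct X n =
        (eulerProduct X (n + m) - eulerProduct X n) -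
          X ^ (n + 1) * (X ^ m * eulerProduct X (n + m)) := by
      rw [← add_assoc, eulerProduct, Finset.prod_range_succ, ← eulerProduct]; ring
    rw [hstep]
    exact dvd_sub ih (dvd_mul_right _ _)

theorem coeff_J_one {m n : ℕ} (h : m ≤ n) : coeff m (J 1) = coeff m (eulerProduct X n) := by
  have hJ : coeff m (J 1) = coeff m (eulerProduct X (m + 1)) := by simp [J, eulerProduct]
  have hsucc := X_pow_dvd_iff.1 (X_pow_dvd_eulerProduct_add_sub m 1) m (by lia)
  have hn := X_pow_dvd_iff.1 (X_pow_dvd_eulerProduct_add_sub m (n - m)) m (by lia)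
  rw [map_sub, sub_eq_zero] at hsucc hn
  rw [hJ, hsucc, ← hn, Nat.add_sub_cancel' h]

theorem X_pow_dvd_J_one_sub_eulerProduct (n : ℕ) :
    (X : ℤ⟦X⟧) ^ (n + 1) ∣ J 1 - eulerProduct X n := by
  refine X_pow_dvd_iff.2 fun m hm => ?_
  rw [map_sub, coeff_J_one (Nat.lt_succ_iff.1 hm), sub_self]

theorem J_eq_expand {b : ℕ} (hb : b ≠ 0) : J b = expand b hb (J 1) := by
  ext n
  have hdvd := map_dvd (expand b hb) (X_pow_dvd_J_one_sub_eulerProduct (n + 1))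
  rw [map_pow, expand_X, ← pow_mul, X_pow_dvd_iff] at hdvd
  have hn := hdvd n (by nlinarith [Nat.pos_of_ne_zero hb])
  rw [map_sub, map_sub, sub_eq_zero] at hn
  rw [hn]
  simp [J, eulerProduct, map_prod, pow_mul]

theorem constantCoeff_J {b : ℕ} (hb : b ≠ 0) : constantCoeff (J b) = 1 := by
  rw [J, ← coeff_zero_eq_constantCoeff_apply, coeff_mk]
  simp [hb]

theorem J_one_eq_pentagonalSeries : J 1 = pentagonalSeries ℤ := by
  ext n
  obtain ⟨s, hs⟩ := Filter.eventually_atTop.1 (coeff_prod_one_sub_X_pow_eventually_eq ℤ n)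
  obtain ⟨N, hN⟩ := s.exists_nat_subset_range
  rw [← hs (Finset.range (N + n)) (hN.trans (by simp)), coeff_J_one (Nat.le_add_left n N),
    eulerProduct]

theorem finite_preimage_pentagonal (n : ℕ) : (pentagonal ⁻¹' {n}).Finite :=
  (Set.finite_singleton n).preimage pentagonal_injective.injOn

theorem J_one_eq_weightedSeries :
    J 1 = weightedSeries pentagonal fun k => (k.negOnePow : ℤ) := by
  rw [J_one_eq_pentagonalSeries]
  ext n
  rw [coeff_weightedSeries]
  by_cases hn : n ∈ Set.range pentagonal
  · obtain ⟨k, rfl⟩ := hn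
    rw [coeff_pentagonalSeries_pentagonal, ← Set.image_singleton,
      pentagonal_injective.preimage_image, finsum_mem_singleton, Int.cast_id]
  · rw [coeff_pentagonalSeries_eq_zero ℤ hn, Set.preimage_singleton_eq_empty.2 hn,
      finsum_mem_empty]

end EulerProduct

section FiniteJacobi

open Polynomial

variable {R : Type*} [CommRing R]

/-- The product `(x - 1) ∏_{0 < i ≤ n} (1 - q ^ i x) (x - q ^ i)`, a finite version of the
theta product in Jacobi's triple product identity. -/
def thetaPoly (q : R) (n : ℕ) : R[X] :=
  (X - 1) * ∏ i ∈ Finset.range n, ((1 - C (q ^ (i + 1)) * X) * (X - C (q ^ (i + 1))))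

theorem thetaPoly_zero (q : R) : thetaPoly q 0 = X - 1 := by simp [thetaPoly]

theorem thetaPoly_succ (q : R) (n : ℕ) :
    thetaPoly q (n + 1) =
      thetaPoly q n * ((1 - C (q ^ (n + 1)) * X) * (X - C (q ^ (n + 1)))) := by
  simp [thetaPoly, Finset.prod_range_succ, mul_assoc]

theorem thetaPoly_comp_C_mul_X (q : R) (n : ℕ) :
    (thetaPoly q n).comp (C q * X) * (X - C (q ^ n)) =
      -C (q ^ n) * (thetaPoly q n * (1 - C (q ^ (n + 1)) * X)) := by
  induction n with
  | zero =>
    simp only [thetaPoly_zero, sub_comp, X_comp, one_comp, pow_zero, map_one, zero_add, pow_one]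
    ring
  | succ n ih =>
    rw [thetaPoly_succ]
    simp only [mul_comp, sub_comp, one_comp, C_comp, X_comp, pow_comp, C_pow] at ih ⊢
    linear_combination (C q * (1 - C q ^ (n + 2) * X) * (X - C q ^ (n + 1))) * ih

theorem natDegree_thetaPoly_le (q : R) (n : ℕ) : (thetaPoly q n).natDegree ≤ 2 * n + 1 := by
  induction n with
  | zero => rw [thetaPoly_zero]; compute_degree
  | succ n ih =>
    rw [thetaPoly_succ]
    have hfactor : ((1 - C (q ^ (n + 1)) * X) * (X - C (q ^ (n + 1)))).natDegree ≤ 2 := by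
      compute_degree
    exact natDegree_mul_le.trans (by lia)

theorem reflect_thetaPoly (q : R) (n : ℕ) :
    reflect (2 * n + 1) (thetaPoly q n) = -thetaPoly q n := by
  have hX : reflect 1 (X : R[X]) = 1 := by simp
  have hone : reflect 1 (1 : R[X]) = X := by simp
  induction n with
  | zero => simp [thetaPoly_zero, reflect_sub, hX, hone]
  | succ n ih =>
    rw [thetaPoly_succ, show 2 * (n + 1) + 1 = (2 * n + 1) + (1 + 1) by ring,
      reflect_mul _ _ (natDegree_thetaPoly_le q n) (by compute_degree), ih,
      reflect_mul _ _ (by compute_degree) (by compute_degree)]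
    simp only [reflect_sub, reflect_C_mul, hX, hone, reflect_C]
    ring

theorem coeff_thetaPoly_symm (q : R) {n j : ℕ} (hj : j ≤ 2 * n + 1) :
    (thetaPoly q n).coeff (2 * n + 1 - j) = -(thetaPoly q n).coeff j := by
  rw [← coeff_neg, ← reflect_thetaPoly, coeff_reflect, revAt_le hj]

theorem eval_one_derivative_thetaPoly (q : R) (n : ℕ) :
    (derivative (thetaPoly q n)).eval 1 = eulerProduct q n ^ 2 := by
  rw [thetaPoly, derivative_mul]
  simp [eval_prod, Finset.prod_mul_distrib, sq, eulerProduct]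

theorem eulerProduct_sq_eq_sum_coeff_thetaPoly (q : R) (n : ℕ) :
    eulerProduct q n ^ 2 =
      ∑ k ∈ Finset.range (n + 1), (2 * (k : R) + 1) * (thetaPoly q n).coeff (n + 1 + k) := by
  rw [← eval_one_derivative_thetaPoly, derivative_eval,
    sum_over_range' _ (by simp) ((n + 1) + (n + 1)) (by have := natDegree_thetaPoly_le q n; lia),
    Finset.sum_range_add _ (n + 1) (n + 1), ← Finset.sum_range_reflect _ (n + 1),
    ← Finset.sum_add_distrib]
  refine Finset.sum_congr rfl fun k hk => ?_
  have hk : k ≤ n := Finset.mem_range_succ_iff.1 hk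
  have hsymm := coeff_thetaPoly_symm q (n := n) (j := n + 1 + k) (by lia)
  rw [show 2 * n + 1 - (n + 1 + k) = n - k by lia] at hsymm
  rw [show n + 1 - 1 - k = n - k by lia, hsymm]
  push_cast [hk]
  ring

theorem coeff_thetaPoly_two_mul_add_one (q : R) (n : ℕ) :
    (thetaPoly q n).coeff (2 * n + 1) = (-1) ^ n * ∏ i ∈ Finset.range n, q ^ (i + 1) := by
  have hsymm := coeff_thetaPoly_symm q (Nat.zero_le (2 * n + 1))
  rw [Nat.sub_zero] at hsymm
  rw [hsymm, coeff_zero_eq_eval_zero, thetaPoly]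
  simp [eval_prod, Finset.prod_neg]

theorem dvd_prod_one_sub_pow_sub_one (q : R) (m n : ℕ) :
    q ^ m ∣ ∏ i ∈ Finset.range n, (1 - q ^ (m + i)) - 1 := by
  induction n with
  | zero => simp
  | succ n ih =>
    obtain ⟨d, hd⟩ := ih
    refine ⟨d - q ^ n * ∏ i ∈ Finset.range n, (1 - q ^ (m + i)), ?_⟩
    rw [Finset.prod_range_succ, pow_add]
    linear_combination hd

variable [IsDomain R] {q : R}

theorem coeff_thetaPoly_succ (hq : q ≠ 0) (n k : ℕ) :
    (thetaPoly q n).coeff (n + 1 + (k + 1)) * (1 - q ^ (n + 1 + (k + 1))) =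
      (q ^ (n + 1) - q ^ (k + 1)) * (thetaPoly q n).coeff (n + 1 + k) := by
  have hfun := congrArg (fun p => coeff p (n + 1 + k + 1)) (thetaPoly_comp_C_mul_X q n)
  have hmul : thetaPoly q n * (1 - C (q ^ (n + 1)) * X) =
      thetaPoly q n - C (q ^ (n + 1)) * (thetaPoly q n * X) := by ring
  simp only [hmul, coeff_mul_X_sub_C, comp_C_mul_X_coeff, neg_mul, coeff_neg, coeff_C_mul,
    coeff_sub, coeff_mul_X] at hfun
  apply mul_left_cancel₀ (pow_ne_zero n hq)
  linear_combination hfun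

theorem coeff_thetaPoly_mul_prod (hq : q ≠ 0) {n k : ℕ} (hk : k ≤ n) :
    (thetaPoly q n).coeff (n + 1 + k) * ∏ i ∈ Finset.range k, (1 - q ^ (n + 2 + i)) =
      (-1) ^ k * (∏ i ∈ Finset.range k, q ^ (i + 1)) *
        (∏ i ∈ Finset.range k, (1 - q ^ (n - i))) * (thetaPoly q n).coeff (n + 1) := by
  induction k with
  | zero => simp
  | succ k ih =>
    have hrec := coeff_thetaPoly_succ hq n k
    have hpow : q ^ (n + 1) = q ^ (k + 1) * q ^ (n - k) := by rw [← pow_add]; congr 1; lia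
    rw [hpow] at hrec
    simp only [Finset.prod_range_succ, show n + 2 + k = n + 1 + (k + 1) by ring]
    linear_combination (∏ i ∈ Finset.range k, (1 - q ^ (n + 2 + i))) * hrec -
      q ^ (k + 1) * (1 - q ^ (n - k)) * ih (by lia)

theorem eulerProduct_mul_coeff_thetaPoly (hq : q ≠ 0) (n : ℕ) :
    eulerProduct q n * (thetaPoly q n).coeff (n + 1) =
      ∏ i ∈ Finset.range n, (1 - q ^ (n + 2 + i)) := by
  have htop := coeff_thetaPoly_mul_prod hq le_rfl (n := n)
  rw [show n + 1 + n = 2 * n + 1 by ring, coeff_thetaPoly_two_mul_add_one] at htop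
  have hrefl : ∏ i ∈ Finset.range n, (1 - q ^ (n - i)) = eulerProduct q n := by
    rw [eulerProduct, ← Finset.prod_range_reflect]
    refine Finset.prod_congr rfl fun i hi => ?_
    have := Finset.mem_range.1 hi
    congr 2; lia
  rw [hrefl] at htop
  have hne : (-1 : R) ^ n * ∏ i ∈ Finset.range n, q ^ (i + 1) ≠ 0 :=
    mul_ne_zero (by simp) (Finset.prod_ne_zero_iff.2 fun i _ => pow_ne_zero _ hq)
  apply mul_left_cancel₀ hne
  linear_combination -htop

theorem dvd_coeff_thetaPoly_sub (hq : q ≠ 0) (n k : ℕ) :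
    q ^ (n + 1) ∣ (thetaPoly q n).coeff (n + 1 + k) -
      (-1) ^ k * (∏ i ∈ Finset.range k, q ^ (i + 1)) * (thetaPoly q n).coeff (n + 1) := by
  induction k with
  | zero => simp
  | succ k ih =>
    obtain ⟨d, hd⟩ := ih
    have hrec := coeff_thetaPoly_succ hq n k
    rw [Finset.prod_range_succ]
    refine ⟨-q ^ (k + 1) * d + (thetaPoly q n).coeff (n + 1 + k) +
      q ^ (k + 1) * (thetaPoly q n).coeff (n + 1 + (k + 1)), ?_⟩
    rw [pow_add q (n + 1) (k + 1)] at hrec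
    linear_combination hrec - q ^ (k + 1) * hd

theorem dvd_eulerProduct_cube_sub_sum (hq : q ≠ 0) (n : ℕ) :
    q ^ (n + 1) ∣ eulerProduct q n ^ 3 - ∑ k ∈ Finset.range (n + 1),
      (2 * (k : R) + 1) * ((-1) ^ k * ∏ i ∈ Finset.range k, q ^ (i + 1)) := by
  set S := ∑ k ∈ Finset.range (n + 1),
    (2 * (k : R) + 1) * ((-1) ^ k * ∏ i ∈ Finset.range k, q ^ (i + 1))
  have hsq : q ^ (n + 1) ∣ eulerProduct q n ^ 2 - S * (thetaPoly q n).coeff (n + 1) := by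
    rw [eulerProduct_sq_eq_sum_coeff_thetaPoly, Finset.sum_mul, ← Finset.sum_sub_distrib]
    refine Finset.dvd_sum fun k _ => ?_
    convert (dvd_coeff_thetaPoly_sub hq n k).mul_left (2 * (k : R) + 1) using 1
    ring
  have hone : q ^ (n + 1) ∣ eulerProduct q n * (thetaPoly q n).coeff (n + 1) - 1 := by
    rw [eulerProduct_mul_coeff_thetaPoly hq]
    exact (pow_dvd_pow q (by lia)).trans (dvd_prod_one_sub_pow_sub_one q (n + 2) n)
  convert dvd_add (hsq.mul_left (eulerProduct q n)) (hone.mul_left S) using 1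
  ring

end FiniteJacobi

section JacobiIdentity

open PowerSeries

theorem eq_weightedSeries_of_dvd {R : Type*} [CommRing R] {f : R⟦X⟧} {e : ℕ → ℕ} {w : ℕ → R}
    (he : ∀ k, k ≤ e k)
    (hf : ∀ n, X ^ (n + 1) ∣ f - ∑ k ∈ Finset.range (n + 1), C (w k) * X ^ e k) :
    f = weightedSeries e w := by
  ext n
  have hfin : (e ⁻¹' {n}).Finite := (Set.finite_Iic n).subset fun k hk => (he k).trans_eq hk
  have hn := X_pow_dvd_iff.1 (hf n) n n.lt_succ_self
  rw [map_sub, sub_eq_zero] at hn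
  rw [hn, coeff_weightedSeries, finsum_mem_eq_finite_toFinset_sum _ hfin, map_sum]
  simp only [coeff_C_mul, coeff_X_pow, mul_ite, mul_one, mul_zero, ← Finset.sum_filter]
  refine Finset.sum_congr (Finset.ext fun k => ?_) fun _ _ => rfl
  have := he k
  simp only [Finset.mem_filter, Finset.mem_range, Set.Finite.mem_toFinset, Set.mem_preimage,
    Set.mem_singleton_iff]
  lia

/-- The triangular number `m (m + 1) / 2`, as a natural number for every integer `m`. -/
def triangular (m : ℤ) : ℕ := (m * (m + 1) / 2).toNat

theorem two_mul_natCast_triangular (m : ℤ) : 2 * (triangular m : ℤ) = m * (m + 1) := by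
  have hnonneg : 0 ≤ m * (m + 1) := by
    rcases lt_or_ge m 0 with hm | hm <;> nlinarith
  have hdvd := (Int.even_mul_succ_self m).two_dvd
  rw [triangular]
  lia

theorem triangular_neg_one_sub (m : ℤ) : triangular (-1 - m) = triangular m := by
  zify
  linarith [two_mul_natCast_triangular m, two_mul_natCast_triangular (-1 - m)]

theorem le_triangular (k : ℕ) : k ≤ triangular k := by
  zify
  nlinarith [two_mul_natCast_triangular k]

theorem prod_pow_succ_eq_pow_triangular {R : Type*} [CommRing R] (q : R) (k : ℕ) :
    ∏ i ∈ Finset.range k, q ^ (i + 1) = q ^ triangular k := by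
  induction k with
  | zero => simp [triangular]
  | succ k ih =>
    have hsucc : triangular (k + 1 : ℕ) = triangular k + (k + 1) := by
      zify
      linarith [two_mul_natCast_triangular k, two_mul_natCast_triangular (k + 1)]
    rw [Finset.prod_range_succ, ih, hsucc, ← pow_add]

theorem J_one_cube_eq_weightedSeries_nat :
    J 1 ^ 3 = weightedSeries (fun k : ℕ => triangular k) fun k => (-1) ^ k * (2 * (k : ℤ) + 1) := by
  refine eq_weightedSeries_of_dvd le_triangular fun n => ?_
  have hJ := (X_pow_dvd_J_one_sub_eulerProduct n).trans (sub_dvd_pow_sub_pow _ _ 3)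
  convert dvd_add hJ (dvd_eulerProduct_cube_sub_sum (X_ne_zero (R := ℤ)) n) using 1
  rw [sub_add_sub_cancel]
  congr! 2 with k
  rw [prod_pow_succ_eq_pow_triangular]
  simp only [map_mul, map_add, map_pow, map_neg, map_one, map_ofNat, map_natCast]
  ring

theorem finite_preimage_triangular (n : ℕ) : (triangular ⁻¹' {n}).Finite := by
  refine (Set.finite_Icc (-(n : ℤ) - 1) n).subset fun m hm => ?_
  have htwo := two_mul_natCast_triangular m
  rw [show triangular m = n from hm] at htwo
  constructor <;> nlinarith

theorem two_mul_J_one_cube :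
    2 * J 1 ^ 3 = weightedSeries triangular fun m => (m.negOnePow : ℤ) * (2 * m + 1) := by
  set w : ℤ → ℤ := fun m => m.negOnePow * (2 * m + 1)
  have hcompl : (Set.range ((↑) : ℕ → ℤ))ᶜ = Set.range Int.negSucc := by
    ext m; cases m <;> simp
  have hw_cast : w ∘ ((↑) : ℕ → ℤ) = fun k : ℕ => (-1) ^ k * (2 * (k : ℤ) + 1) := by
    ext k
    simp [w, Int.coe_negOnePow_natCast]
  have hw_negSucc : w ∘ Int.negSucc = fun k : ℕ => (-1) ^ k * (2 * (k : ℤ) + 1) := by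
    ext k
    simp only [w, Function.comp_apply, Int.negSucc_eq, neg_add_rev, Int.negOnePow_add,
      Int.negOnePow_neg, Int.negOnePow_one, neg_mul, one_mul, Units.val_neg,
      Int.coe_negOnePow_natCast]
    ring
  have he_negSucc : triangular ∘ Int.negSucc = fun k : ℕ => triangular k := by
    ext k
    rw [Function.comp_apply, ← triangular_neg_one_sub, Int.negSucc_eq]
    congr 1
    ring
  rw [← Set.indicator_self_add_compl (Set.range ((↑) : ℕ → ℤ)) w, hcompl,
    weightedSeries_add finite_preimage_triangular,
    weightedSeries_indicator_range _ _ Nat.cast_injective,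
    weightedSeries_indicator_range _ _ fun _ _ => Int.negSucc.inj, two_mul,
    J_one_cube_eq_weightedSeries_nat, hw_cast, hw_negSucc, he_negSucc]
  rfl

instance powerSeries_charZero {R : Type*} [Semiring R] [CharZero R] : CharZero R⟦X⟧ :=
  charZero_of_injective_ringHom C_injective

theorem weightedSeries_triangular_negOnePow :
    weightedSeries triangular (fun m => (m.negOnePow : ℤ)) = 0 := by
  set w : ℤ → ℤ := fun m => m.negOnePow
  have hneg : w ∘ Equiv.subLeft (-1) = fun m => -1 * w m := by
    ext m
    simp [w, Int.negOnePow_sub]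
  have hself := weightedSeries_comp_equiv triangular w (Equiv.subLeft (-1))
  rw [hneg, show triangular ∘ Equiv.subLeft (-1) = triangular from funext triangular_neg_one_sub,
    weightedSeries_const_mul finite_preimage_triangular, map_neg, map_one, neg_one_mul] at hself
  exact self_eq_neg.1 hself.symm

end JacobiIdentity

section Dissection

open PowerSeries

theorem range_mul_add_eq_setOf_intCast (n : ℕ) (a : ℤ) :
    Set.range (fun l : ℤ => n * l + a) = {k : ℤ | (k : ZMod n) = a} := by
  ext k
  rw [Set.mem_ofPred_eq, eq_comm, ZMod.intCast_eq_intCast_iff_dvd_sub]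
  exact exists_congr fun l => by rw [eq_comm, sub_eq_iff_eq_add]

theorem mul_add_injective {n : ℕ} (hn : n ≠ 0) (a : ℤ) :
    Function.Injective fun l : ℤ => n * l + a := fun _ _ h => by simpa [hn] using h

theorem coe_negOnePow_eq_neg {a b : ℤ} (hab : Odd (a - b)) :
    (a.negOnePow : ℤ) = -b.negOnePow := by
  rw [← sub_add_cancel a b, Int.negOnePow_add, Int.negOnePow_odd _ hab]
  simp

theorem two_mul_pentagonal_zmod (n : ℕ) (k : ℤ) :
    2 * (pentagonal k : ZMod n) = k * (3 * k - 1) := by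
  simpa using congrArg (Int.cast : ℤ → ZMod n) (two_mul_natCast_pentagonal k)

theorem two_mul_triangular_zmod (n : ℕ) (m : ℤ) :
    2 * (triangular m : ZMod n) = m * (m + 1) := by
  simpa using congrArg (Int.cast : ℤ → ZMod n) (two_mul_natCast_triangular m)

theorem component_J_one_eq_zero {r : ZMod 7} (hr : r = 3 ∨ r = 4 ∨ r = 6) :
    component 7 r (J 1) = 0 := by
  rw [J_one_eq_weightedSeries]
  refine component_weightedSeries_eq_zero _ fun k hk => ?_
  have hsq := two_mul_pentagonal_zmod 7 k
  rw [hk] at hsq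
  have hnonresidue : ∀ r z : ZMod 7, r = 3 ∨ r = 4 ∨ r = 6 → 2 * r ≠ z * (3 * z - 1) := by
    decide
  exact hnonresidue r k hr hsq

theorem setOf_pentagonal_eq_two :
    {k | (pentagonal k : ZMod 7) = 2} = Set.range fun l : ℤ => (7 : ℕ) * l + -1 := by
  have hiff : ∀ p z : ZMod 7, 2 * p = z * (3 * z - 1) → (p = 2 ↔ z = -1) := by decide
  rw [range_mul_add_eq_setOf_intCast]
  ext k
  simpa using hiff _ _ (two_mul_pentagonal_zmod 7 k)

theorem component_two_J_one : component 7 2 (J 1) = -(X ^ 2 * J 49) := by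
  have hexp (l : ℤ) : pentagonal ((7 : ℕ) * l + -1) = 49 * pentagonal l + 2 := by
    zify
    linarith [two_mul_natCast_pentagonal l, two_mul_natCast_pentagonal (7 * l + -1)]
  have hsign (l : ℤ) : (((7 : ℕ) * l + -1).negOnePow : ℤ) = -1 * l.negOnePow := by
    rw [coe_negOnePow_eq_neg ⟨3 * l - 1, by push_cast; ring⟩, neg_one_mul]
  rw [J_one_eq_weightedSeries, component_weightedSeries, setOf_pentagonal_eq_two,
    weightedSeries_indicator_range_mul_add (mul_add_injective (by simp) _) (by simp) hexp hsign,
    weightedSeries_const_mul finite_preimage_pentagonal, ← J_one_eq_weightedSeries, map_mul,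
    ← J_eq_expand]
  simp

theorem component_two_J_one_cube : component 7 2 (J 1 ^ 3) = 0 := by
  have hzero : 2 * component 7 2 (J 1 ^ 3) = 0 := by
    rw [two_mul, ← map_add, ← two_mul, two_mul_J_one_cube]
    refine component_weightedSeries_eq_zero _ fun m hm => ?_
    have hsq := two_mul_triangular_zmod 7 m
    rw [hm] at hsq
    have hnonresidue : ∀ z : ZMod 7, 2 * 2 ≠ z * (z + 1) := by decide
    exact hnonresidue m hsq
  exact (mul_eq_zero_iff_left two_ne_zero).1 hzero

theorem setOf_triangular_eq_six :
    {m | (triangular m : ZMod 7) = 6} = Set.range fun l : ℤ => (7 : ℕ) * l + 3 := by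
  have hiff : ∀ p z : ZMod 7, 2 * p = z * (z + 1) → (p = 6 ↔ z = 3) := by decide
  rw [range_mul_add_eq_setOf_intCast]
  ext k
  simpa using hiff _ _ (two_mul_triangular_zmod 7 k)

theorem component_six_J_one_cube : component 7 6 (J 1 ^ 3) = -7 * (X ^ 2 * J 49) ^ 3 := by
  have hexp (l : ℤ) : triangular ((7 : ℕ) * l + 3) = 49 * triangular l + 6 := by
    zify
    linarith [two_mul_natCast_triangular l, two_mul_natCast_triangular (7 * l + 3)]
  have hweight (l : ℤ) : ((((7 : ℕ) * l + 3).negOnePow : ℤ) * (2 * ((7 : ℕ) * l + 3) + 1)) =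
      -7 * (l.negOnePow * (2 * l + 1)) := by
    rw [coe_negOnePow_eq_neg (b := l) ⟨3 * l + 1, by push_cast; ring⟩]
    push_cast
    ring
  have htwo : 2 * component 7 6 (J 1 ^ 3) = 2 * (-7 * (X ^ 2 * J 49) ^ 3) := by
    rw [two_mul, ← map_add, ← two_mul, two_mul_J_one_cube, component_weightedSeries,
      setOf_triangular_eq_six,
      weightedSeries_indicator_range_mul_add (mul_add_injective (by simp) _) (by simp) hexp hweight,
      weightedSeries_const_mul finite_preimage_triangular, ← two_mul_J_one_cube, map_mul, map_mul,
      map_pow, map_ofNat, expand_C, ← J_eq_expand, map_neg, map_ofNat]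
    ring
  exact mul_left_cancel₀ two_ne_zero htwo

end Dissection

section QuarticDissection

open PowerSeries

/-- The exponents in the double series for `J 1 ^ 4` obtained from the pentagonal number theorem
for `J 1` and Jacobi's identity for `J 1 ^ 3`. -/
def quarticExponent (p : ℤ × ℤ) : ℕ := pentagonal p.1 + triangular p.2

/-- The weights in the double series for `2 * J 1 ^ 4`. -/
def quarticWeight (p : ℤ × ℤ) : ℤ := (p.1 + p.2).negOnePow * (2 * p.2 + 1)

theorem two_mul_natCast_quarticExponent (p : ℤ × ℤ) :
    2 * (quarticExponent p : ℤ) = p.1 * (3 * p.1 - 1) + p.2 * (p.2 + 1) := by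
  rw [quarticExponent, Nat.cast_add, mul_add, two_mul_natCast_pentagonal,
    two_mul_natCast_triangular]

theorem finite_preimage_quarticExponent (n : ℕ) : (quarticExponent ⁻¹' {n}).Finite :=
  finite_preimage_add finite_preimage_pentagonal finite_preimage_triangular n

theorem weightedSeries_quarticExponent_mul (v w : ℤ → ℤ) :
    weightedSeries quarticExponent (fun p => (p.1 + p.2).negOnePow * (v p.1 * w p.2)) =
      weightedSeries pentagonal (fun k => k.negOnePow * v k) *
        weightedSeries triangular fun m => m.negOnePow * w m := by
  rw [weightedSeries_mul finite_preimage_pentagonal finite_preimage_triangular]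
  congr! 1 with p
  ext p
  rw [Int.negOnePow_add, Units.val_mul]
  ring

theorem two_mul_J_one_pow_four :
    2 * J 1 ^ 4 = weightedSeries quarticExponent quarticWeight := by
  have hmul := weightedSeries_quarticExponent_mul 1 fun m => 2 * m + 1
  simp only [Pi.one_apply, one_mul, mul_one, ← J_one_eq_weightedSeries,
    ← two_mul_J_one_cube] at hmul
  calc 2 * J 1 ^ 4 = J 1 * (2 * J 1 ^ 3) := by ring
    _ = weightedSeries quarticExponent quarticWeight := hmul.symm

theorem weightedSeries_quarticExponent_linear :
    weightedSeries quarticExponent (fun p => (p.1 + p.2).negOnePow * (6 * p.1 - 1)) = 0 := by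
  have hmul := weightedSeries_quarticExponent_mul (fun k => 6 * k - 1) 1
  simpa [weightedSeries_triangular_negOnePow] using hmul

theorem weightedSeries_quarticExponent_rotated :
    weightedSeries quarticExponent (fun p => -((p.1 + p.2).negOnePow * (6 * p.1 + 4 * p.2 + 1))) =
      -4 * J 1 ^ 4 := by
  have hsplit : (fun p : ℤ × ℤ => -((p.1 + p.2).negOnePow * (6 * p.1 + 4 * p.2 + 1) : ℤ)) =
      (fun p => -2 * quarticWeight p) +
        fun p => -1 * ((p.1 + p.2).negOnePow * (6 * p.1 - 1) : ℤ) := by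
    ext p
    simp only [quarticWeight, Pi.add_apply]
    ring
  rw [hsplit, weightedSeries_add finite_preimage_quarticExponent,
    weightedSeries_const_mul finite_preimage_quarticExponent,
    weightedSeries_const_mul finite_preimage_quarticExponent,
    weightedSeries_quarticExponent_linear, ← two_mul_J_one_pow_four, map_neg, map_ofNat]
  ring

/-- In the coordinates `x = 6 k - 1`, `y = 2 m + 1`, in which `24 * quarticExponent (k, m) + 4` is
the norm of `z = x + y √-3`, multiplication of `z` by the element `-2 - √-3` of norm `7`. -/
def quarticRotation (p : ℤ × ℤ) : ℤ × ℤ := (p.2 - 2 * p.1 + 1, -(3 * p.1 + 2 * p.2 + 1))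

/-- In the coordinates of `quarticRotation`, the map sending `z` to `-2 + √-3` times its
conjugate. -/
def quarticConjRotation (p : ℤ × ℤ) : ℤ × ℤ := (p.2 - 2 * p.1 + 1, 3 * p.1 + 2 * p.2)

/-- In the coordinates of `quarticRotation`, multiplication of `z` by `7`. -/
def quarticScaling (p : ℤ × ℤ) : ℤ × ℤ := (7 * p.1 - 1, 7 * p.2 + 3)

theorem quarticRotation_injective : quarticRotation.Injective := by
  rintro ⟨k, m⟩ ⟨k', m'⟩ h
  simp only [quarticRotation, Prod.mk.injEq] at h ⊢
  lia

theorem quarticConjRotation_injective : quarticConjRotation.Injective := by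
  rintro ⟨k, m⟩ ⟨k', m'⟩ h
  simp only [quarticConjRotation, Prod.mk.injEq] at h ⊢
  lia

theorem quarticScaling_injective : quarticScaling.Injective := by
  rintro ⟨k, m⟩ ⟨k', m'⟩ h
  simp only [quarticScaling, Prod.mk.injEq] at h ⊢
  lia

theorem mem_range_quarticRotation {p : ℤ × ℤ} :
    p ∈ Set.range quarticRotation ↔ 7 ∣ p.2 + 2 * p.1 - 1 := by
  obtain ⟨k, m⟩ := p
  simp only [Set.mem_range, quarticRotation, Prod.exists, Prod.mk.injEq]
  constructor
  · rintro ⟨k, m, rfl, rfl⟩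
    lia
  · rintro ⟨j, hj⟩
    exact ⟨-j, k - 2 * j - 1, by lia, by lia⟩

theorem mem_range_quarticConjRotation {p : ℤ × ℤ} :
    p ∈ Set.range quarticConjRotation ↔ 7 ∣ p.2 - 2 * p.1 + 2 := by
  obtain ⟨k, m⟩ := p
  simp only [Set.mem_range, quarticConjRotation, Prod.exists, Prod.mk.injEq]
  constructor
  · rintro ⟨k, m, rfl, rfl⟩
    lia
  · rintro ⟨j, hj⟩
    exact ⟨j, k + 2 * j - 1, by lia, by lia⟩

theorem range_quarticRotation_inter_range_quarticConjRotation :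
    Set.range quarticRotation ∩ Set.range quarticConjRotation = Set.range quarticScaling := by
  ext ⟨k, m⟩
  rw [Set.mem_inter_iff, mem_range_quarticRotation, mem_range_quarticConjRotation]
  simp only [Set.mem_range, quarticScaling, Prod.exists, Prod.mk.injEq]
  constructor
  · intro h
    exact ⟨(k + 1) / 7, (m - 3) / 7, by lia, by lia⟩
  · rintro ⟨k, m, rfl, rfl⟩
    lia

theorem setOf_quarticExponent_eq_one :
    {p | (quarticExponent p : ZMod 7) = 1} =
      Set.range quarticRotation ∪ Set.range quarticConjRotation := by
  ext ⟨k, m⟩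
  have hfactor : (m + 2 * k - 1) * (m - 2 * k + 2) =
      2 * ((quarticExponent (k, m) : ℤ) - 1) - 7 * (k ^ 2 - k) := by
    linear_combination -two_mul_natCast_quarticExponent (k, m)
  have hresidue := ZMod.intCast_zmod_eq_zero_iff_dvd (quarticExponent (k, m) - 1 : ℤ) 7
  push_cast [sub_eq_zero] at hresidue
  have hprime : Prime (7 : ℤ) := by norm_num
  rw [Set.mem_ofPred_eq, Set.mem_union, mem_range_quarticRotation, mem_range_quarticConjRotation,
    ← hprime.dvd_mul, hfactor, hresidue]
  lia

theorem quarticExponent_quarticRotation (p : ℤ × ℤ) :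
    quarticExponent (quarticRotation p) = 7 * quarticExponent p + 1 := by
  have htwo := two_mul_natCast_quarticExponent (quarticRotation p)
  simp only [quarticRotation] at htwo ⊢
  zify
  linarith [two_mul_natCast_quarticExponent p]

theorem quarticExponent_quarticConjRotation (p : ℤ × ℤ) :
    quarticExponent (quarticConjRotation p) = 7 * quarticExponent p + 1 := by
  have htwo := two_mul_natCast_quarticExponent (quarticConjRotation p)
  simp only [quarticConjRotation] at htwo ⊢
  zify
  linarith [two_mul_natCast_quarticExponent p]

theorem quarticExponent_quarticScaling (p : ℤ × ℤ) :
    quarticExponent (quarticScaling p) = 49 * quarticExponent p + 8 := by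
  have htwo := two_mul_natCast_quarticExponent (quarticScaling p)
  simp only [quarticScaling] at htwo ⊢
  zify
  linarith [two_mul_natCast_quarticExponent p]

theorem quarticWeight_quarticRotation (p : ℤ × ℤ) :
    quarticWeight (quarticRotation p) = -((p.1 + p.2).negOnePow * (6 * p.1 + 4 * p.2 + 1)) := by
  rw [quarticWeight, quarticRotation,
    (Int.negOnePow_eq_iff _ (p.1 + p.2)).2 ⟨-3 * p.1 - p.2, by ring⟩]
  ring

theorem quarticWeight_quarticConjRotation (p : ℤ × ℤ) :
    quarticWeight (quarticConjRotation p) = -((p.1 + p.2).negOnePow * (6 * p.1 + 4 * p.2 + 1)) := by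
  rw [quarticWeight, quarticConjRotation, coe_negOnePow_eq_neg (b := p.1 + p.2) ⟨p.2, by ring⟩]
  ring

theorem quarticWeight_quarticScaling (p : ℤ × ℤ) :
    quarticWeight (quarticScaling p) = 7 * quarticWeight p := by
  rw [quarticWeight, quarticScaling,
    (Int.negOnePow_eq_iff _ (p.1 + p.2)).2 ⟨3 * (p.1 + p.2) + 1, by ring⟩, quarticWeight]
  ring

theorem weightedSeries_indicator_range_of_rotated {φ : ℤ × ℤ → ℤ × ℤ} (hφ : φ.Injective)
    (he : ∀ p, quarticExponent (φ p) = 7 * quarticExponent p + 1)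
    (hw : ∀ p, quarticWeight (φ p) = -((p.1 + p.2).negOnePow * (6 * p.1 + 4 * p.2 + 1))) :
    weightedSeries quarticExponent ((Set.range φ).indicator quarticWeight) =
      -4 * (X * J 7 ^ 4) := by
  rw [weightedSeries_indicator_range_mul_add hφ (by simp) he hw,
    weightedSeries_quarticExponent_rotated, map_mul, map_pow, ← J_eq_expand, map_neg, map_ofNat]
  ring

theorem weightedSeries_indicator_range_quarticScaling :
    weightedSeries quarticExponent ((Set.range quarticScaling).indicator quarticWeight) =
      14 * (X ^ 2 * J 49) ^ 4 := by
  rw [weightedSeries_indicator_range_mul_add quarticScaling_injective (by simp)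
      quarticExponent_quarticScaling quarticWeight_quarticScaling,
    weightedSeries_const_mul finite_preimage_quarticExponent, ← two_mul_J_one_pow_four, map_mul,
    map_mul, map_pow, ← J_eq_expand, expand_C, map_ofNat, map_ofNat]
  ring

theorem component_one_J_one_pow_four :
    component 7 1 (J 1 ^ 4) = -4 * (X * J 7 ^ 4) - 7 * (X ^ 2 * J 49) ^ 4 := by
  have hunion := Set.indicator_union_add_inter quarticWeight
    (Set.range quarticRotation) (Set.range quarticConjRotation)
  rw [← setOf_quarticExponent_eq_one,
    range_quarticRotation_inter_range_quarticConjRotation] at hunion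
  have hseries := congrArg (weightedSeries quarticExponent) hunion
  rw [weightedSeries_add finite_preimage_quarticExponent,
    weightedSeries_add finite_preimage_quarticExponent,
    weightedSeries_indicator_range_quarticScaling,
    weightedSeries_indicator_range_of_rotated quarticRotation_injective
      quarticExponent_quarticRotation quarticWeight_quarticRotation,
    weightedSeries_indicator_range_of_rotated quarticConjRotation_injective
      quarticExponent_quarticConjRotation quarticWeight_quarticConjRotation,
    ← component_weightedSeries, ← two_mul_J_one_pow_four, two_mul, map_add] at hseries
  refine mul_left_cancel₀ (two_ne_zero (α := ℤ⟦X⟧)) ?_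
  linear_combination hseries

end QuarticDissection

section DissectionRelations

open PowerSeries

local notation "α" => component 7 0 (J 1)
local notation "β" => component 7 1 (J 1)
local notation "δ" => component 7 5 (J 1)
local notation "ω" => X ^ 2 * J 49

theorem component_J_one_mul (s : ZMod 7) (g : ℤ⟦X⟧) :
    component 7 s (J 1 * g) = α * component 7 s g + β * component 7 (s - 1) g -
      ω * component 7 (s - 2) g + δ * component 7 (s - 5) g := by
  rw [component_mul]
  refine (Fin.sum_univ_seven _).trans ?_
  change α * component 7 (s - 0) g + β * component 7 (s - 1) g +
    component 7 2 (J 1) * component 7 (s - 2) g + component 7 3 (J 1) * component 7 (s - 3) g +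
    component 7 4 (J 1) * component 7 (s - 4) g + δ * component 7 (s - 5) g +
    component 7 6 (J 1) * component 7 (s - 6) g = _
  simp (disch := decide) only [component_two_J_one, component_J_one_eq_zero, sub_zero]
  ring

theorem J_one_eq_dissection : J 1 = α + β + δ - ω := by
  refine (sum_component (m := 7) (J 1)).symm.trans ((Fin.sum_univ_seven _).trans ?_)
  change α + β + component 7 2 (J 1) + component 7 3 (J 1) + component 7 4 (J 1) + δ +
    component 7 6 (J 1) = _
  simp (disch := decide) only [component_two_J_one, component_J_one_eq_zero]
  ring

theorem J_one_dissection_cubic : α * β ^ 2 - α ^ 2 * ω + δ * ω ^ 2 = 0 := by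
  have hcube : component 7 2 (J 1 ^ 3) = 3 * (α * β ^ 2 - α ^ 2 * ω + δ * ω ^ 2) := by
    simp only [pow_succ' (J 1), pow_zero, mul_one, component_J_one_mul]
    reduce_mod_char
    simp (disch := decide) only [component_two_J_one, component_J_one_eq_zero]
    ring
  rw [component_two_J_one_cube] at hcube
  exact (mul_eq_zero.1 hcube.symm).resolve_left (OfNat.ofNat_ne_zero 3)

theorem J_one_dissection_prod : α * β * δ = -ω ^ 3 := by
  have hcube : component 7 6 (J 1 ^ 3) = 6 * (α * β * δ) - ω ^ 3 := by
    simp only [pow_succ' (J 1), pow_zero, mul_one, component_J_one_mul]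
    reduce_mod_char
    simp (disch := decide) only [component_two_J_one, component_J_one_eq_zero]
    ring
  rw [component_six_J_one_cube] at hcube
  refine mul_left_cancel₀ (OfNat.ofNat_ne_zero 6) ?_
  linear_combination -hcube

theorem J_one_dissection_quartic :
    α ^ 3 * β + β ^ 3 * δ + δ ^ 3 * α + 8 * ω ^ 4 = -(X * J 7 ^ 4) := by
  have hfourth : component 7 1 (J 1 ^ 4) = 4 * (α ^ 3 * β + β ^ 3 * δ + δ ^ 3 * α) + ω ^ 4 -
      24 * (α * β * δ * ω) := by
    simp only [pow_succ' (J 1), pow_zero, mul_one, component_J_one_mul]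
    reduce_mod_char
    simp (disch := decide) only [component_two_J_one, component_J_one_eq_zero]
    ring
  rw [component_one_J_one_pow_four, J_one_dissection_prod] at hfourth
  refine mul_left_cancel₀ (OfNat.ofNat_ne_zero 4) ?_
  linear_combination -hfourth

end DissectionRelations

section ModularEquation

section CyclicRelations

variable {R : Type*} [CommRing R] {a b c : R}

theorem cyclic_cubic_rotate (hprod : a * b * c = -1) (hcubic : a * b ^ 2 - a ^ 2 + c = 0) :
    b * c ^ 2 - b ^ 2 + a = 0 := by
  linear_combination b * c * hcubic - (b ^ 2 - a) * hprod

theorem cyclic_sum_mul_sq (hprod : a * b * c = -1) (hcubic : a * b ^ 2 - a ^ 2 + c = 0) :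
    a * b ^ 2 + b * c ^ 2 + c * a ^ 2 =
      (a + b + c) ^ 2 - 2 * (a * b + b * c + c * a) - (a + b + c) := by
  have hcubic' := cyclic_cubic_rotate hprod hcubic
  have hcubic'' := cyclic_cubic_rotate (by linear_combination hprod) hcubic'
  linear_combination hcubic + hcubic' + hcubic''

theorem cyclic_esymm_two_quadratic (hprod : a * b * c = -1)
    (hcubic : a * b ^ 2 - a ^ 2 + c = 0) :
    (a * b + b * c + c * a) ^ 2 + (3 * (a + b + c) + 1) * (a * b + b * c + c * a) =
      (a + b + c) ^ 3 - 2 * (a + b + c) - 3 := by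
  have hcubic' := cyclic_cubic_rotate hprod hcubic
  have hcubic'' := cyclic_cubic_rotate (by linear_combination hprod) hcubic'
  linear_combination a * hcubic + b * hcubic' + c * hcubic'' + (2 * (a + b + c) + 3) * hprod

theorem cyclic_quartic_eq (hprod : a * b * c = -1) (hcubic : a * b ^ 2 - a ^ 2 + c = 0) :
    a ^ 3 * b + b ^ 3 * c + c ^ 3 * a =
      (a + b + c) * ((a + b + c) * (a * b + b * c + c * a) + 2 - (a + b + c) ^ 2 +
        2 * (a * b + b * c + c * a) + (a + b + c)) - (a * b + b * c + c * a) ^ 2 := by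
  linear_combination -(a + b + c) * cyclic_sum_mul_sq hprod hcubic - 2 * (a + b + c) * hprod

theorem cyclic_quadratic_relation (hprod : a * b * c = -1)
    (hcubic : a * b ^ 2 - a ^ 2 + c = 0) {x T : R} (hx : x = a + b + c - 1)
    (hT : T = -(a ^ 3 * b + b ^ 3 * c + c ^ 3 * a) - 8) :
    T ^ 2 = (7 * x ^ 3 + 35 * x ^ 2 + 49 * x) * T +
      (x ^ 7 + 7 * x ^ 6 + 21 * x ^ 5 + 49 * x ^ 4 + 147 * x ^ 3 + 343 * x ^ 2 + 343 * x) := by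
  have hquadratic := cyclic_esymm_two_quadratic hprod hcubic
  rw [cyclic_quartic_eq hprod hcubic] at hT
  generalize a * b + b * c + c * a = p at *
  obtain rfl : T = -(x ^ 2 + 7 * x + 7) * p + 2 * x ^ 3 + 5 * x ^ 2 - 14 := by
    rw [hT, hx]
    linear_combination hquadratic
  rw [show a + b + c = x + 1 by rw [hx]; ring] at hquadratic
  linear_combination (x ^ 2 + 7 * x + 7) ^ 2 * hquadratic

end CyclicRelations

section Elimination

variable {R K : Type*} [CommRing R] [Field K]

/-- The polynomial form of the modular equation `t ^ 7 = ∑ l, aPoly l V * t ^ l`: it vanishes at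
`S` and `v = y + 49 / y` when `t = S / y` and `V = 1 / (S * y)`. The equation is invariant under
`y ↦ 49 / y`, and the coefficients are the Dickson polynomials `∑ i + j = n, y ^ i * (49 / y) ^ j`
written in terms of `v`. -/
def modularOctic (S v : R) : R :=
  S ^ 8 - 4018 * S ^ 6 - 8624 * S ^ 5 * v - 5915 * S ^ 4 * (v ^ 2 - 49) -
    1904 * S ^ 3 * (v ^ 3 - 98 * v) - 322 * S ^ 2 * (v ^ 4 - 147 * v ^ 2 + 2401) -
    28 * S * (v ^ 5 - 196 * v ^ 3 + 7203 * v) -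
    (v ^ 6 - 245 * v ^ 4 + 14406 * v ^ 2 - 117649)

theorem modularOctic_eq_mul (S u : R) :
    modularOctic S (u ^ 2 - 14) =
      (S ^ 2 - 7 * (u + 5) * S - (u ^ 3 + 7 * u ^ 2 - 49)) *
      (S ^ 2 - 7 * (-u + 5) * S - ((-u) ^ 3 + 7 * (-u) ^ 2 - 49)) *
      (S ^ 4 + 70 * S ^ 3 + 63 * (u ^ 2 - 7) * S ^ 2 + (14 * u ^ 4 - 294 * u ^ 2 + 686) * S +
        (u ^ 6 - 35 * u ^ 4 + 294 * u ^ 2 - 343)) := by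
  rw [modularOctic]
  ring

theorem pow_seven_eq_sum_aPoly_of_modularOctic {S y t V : K} (hy : y ≠ 0) (ht : t * y = S)
    (hV : V * (S * y) = 1) (hoctic : modularOctic S (y + 49 / y) = 0) :
    t ^ 7 = ∑ l ∈ Finset.range 7, aPoly l V * t ^ l := by
  have hS : S ≠ 0 := left_ne_zero_of_mul (right_ne_zero_of_mul_eq_one hV)
  obtain rfl := eq_div_of_mul_eq hy ht
  obtain rfl := eq_one_div_of_mul_eq_one_left hV
  refine mul_left_cancel₀ (mul_ne_zero hS (pow_ne_zero 7 hy)) ?_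
  simp only [Finset.sum_range_succ, Finset.sum_range_zero, aPoly]
  rw [modularOctic] at hoctic
  field_simp at hoctic ⊢
  linear_combination hoctic

theorem modularOctic_eq_zero {S x : K} (hx : x ≠ 0)
    (hquadratic : (S * x ^ 2) ^ 2 = (7 * x ^ 3 + 35 * x ^ 2 + 49 * x) * (S * x ^ 2) +
      (x ^ 7 + 7 * x ^ 6 + 21 * x ^ 5 + 49 * x ^ 4 + 147 * x ^ 3 + 343 * x ^ 2 + 343 * x)) :
    modularOctic S (x ^ 2 + 49 / x ^ 2) = 0 := by
  obtain ⟨u, hu⟩ : ∃ u, u = x + 7 / x := ⟨_, rfl⟩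
  have hfactor : S ^ 2 - 7 * (u + 5) * S - (u ^ 3 + 7 * u ^ 2 - 49) = 0 := by
    rw [hu]
    field_simp
    refine mul_left_cancel₀ hx ?_
    linear_combination hquadratic
  have hv : x ^ 2 + 49 / x ^ 2 = u ^ 2 - 14 := by
    rw [hu]
    field_simp
    ring
  rw [hv, modularOctic_eq_mul, hfactor, zero_mul, zero_mul]

theorem pow_seven_eq_sum_aPoly_of_quadratic {x T t V : K} (hx : x ≠ 0) (ht : t * x ^ 4 = T)
    (hV : V * T = 1)
    (hquadratic : T ^ 2 = (7 * x ^ 3 + 35 * x ^ 2 + 49 * x) * T +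
      (x ^ 7 + 7 * x ^ 6 + 21 * x ^ 5 + 49 * x ^ 4 + 147 * x ^ 3 + 343 * x ^ 2 + 343 * x)) :
    t ^ 7 = ∑ l ∈ Finset.range 7, aPoly l V * t ^ l := by
  obtain rfl : t * x ^ 2 * x ^ 2 = T := by linear_combination ht
  exact pow_seven_eq_sum_aPoly_of_modularOctic (pow_ne_zero 2 hx) rfl hV
    (modularOctic_eq_zero hx hquadratic)

theorem pow_seven_eq_sum_aPoly_of_dissection_of_field {A B D W E F G Q t V : K} (hE : E ≠ 0)
    (hW : W = Q ^ 2 * G) (hW₀ : W ≠ 0) (hsum : E = A + B + D - W)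
    (hprod : A * B * D = -W ^ 3) (hcubic : A * B ^ 2 - A ^ 2 * W + D * W ^ 2 = 0)
    (hquartic : A ^ 3 * B + B ^ 3 * D + D ^ 3 * A + 8 * W ^ 4 = -(Q * F ^ 4))
    (ht : t * E ^ 4 = Q * F ^ 4) (hV : V * F ^ 4 = Q ^ 7 * G ^ 4) :
    t ^ 7 = ∑ l ∈ Finset.range 7, aPoly l V * t ^ l := by
  obtain ⟨a, rfl⟩ : ∃ a, A = a * W := ⟨A / W, (div_mul_cancel₀ _ hW₀).symm⟩
  obtain ⟨b, rfl⟩ : ∃ b, B = b * W := ⟨B / W, (div_mul_cancel₀ _ hW₀).symm⟩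
  obtain ⟨c, rfl⟩ : ∃ c, D = c * W := ⟨D / W, (div_mul_cancel₀ _ hW₀).symm⟩
  have hprod' : a * b * c = -1 :=
    mul_right_cancel₀ (pow_ne_zero 3 hW₀) (by linear_combination hprod)
  have hcubic' : a * b ^ 2 - a ^ 2 + c = 0 :=
    mul_right_cancel₀ (pow_ne_zero 3 hW₀) (by linear_combination hcubic)
  obtain rfl : E = (a + b + c - 1) * W := by linear_combination hsum
  have hT : (-(a ^ 3 * b + b ^ 3 * c + c ^ 3 * a) - 8) * W ^ 4 = Q * F ^ 4 := by
    linear_combination -hquartic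
  refine pow_seven_eq_sum_aPoly_of_quadratic (left_ne_zero_of_mul hE) ?_ ?_
    (cyclic_quadratic_relation hprod' hcubic' rfl rfl)
  · refine mul_right_cancel₀ (pow_ne_zero 4 hW₀) ?_
    linear_combination ht - hT
  · refine mul_right_cancel₀ (pow_ne_zero 4 hW₀) ?_
    rw [mul_assoc, hT, hW]
    linear_combination Q * hV

theorem map_aPoly {R' : Type*} [CommRing R'] (f : R →+* R') (l : ℕ) (x : R) :
    f (aPoly l x) = aPoly l (f x) := by
  unfold aPoly
  split <;> simp only [map_add, map_mul, map_pow, map_ofNat, map_zero]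

theorem pow_seven_eq_sum_aPoly_of_dissection [IsDomain R] {A B D W E F G Q t V : R} (hE : E ≠ 0)
    (hQ : Q ≠ 0) (hG : G ≠ 0) (hW : W = Q ^ 2 * G) (hsum : E = A + B + D - W)
    (hprod : A * B * D = -W ^ 3) (hcubic : A * B ^ 2 - A ^ 2 * W + D * W ^ 2 = 0)
    (hquartic : A ^ 3 * B + B ^ 3 * D + D ^ 3 * A + 8 * W ^ 4 = -(Q * F ^ 4))
    (ht : t * E ^ 4 = Q * F ^ 4) (hV : V * F ^ 4 = Q ^ 7 * G ^ 4) :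
    t ^ 7 = ∑ l ∈ Finset.range 7, aPoly l V * t ^ l := by
  have hinj := IsFractionRing.injective R (FractionRing R)
  have hW₀ : W ≠ 0 := hW ▸ mul_ne_zero (pow_ne_zero 2 hQ) hG
  have hne {x : R} : x ≠ 0 → algebraMap R (FractionRing R) x ≠ 0 := (map_ne_zero_iff _ hinj).2
  apply_fun algebraMap R (FractionRing R) at hW hsum hprod hcubic hquartic ht hV
  simp only [map_mul, map_add, map_sub, map_neg, map_pow, map_zero, map_ofNat]
    at hW hsum hprod hcubic hquartic ht hV
  refine hinj ?_
  simp only [map_pow, map_sum, map_mul, map_aPoly]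
  exact pow_seven_eq_sum_aPoly_of_dissection_of_field (hne hE) hW (hne hW₀) hsum hprod hcubic
    hquartic ht hV

end Elimination

end ModularEquation

section LaurentExpand

open HahnSeries

/-- The substitution `q ↦ q ^ m` in Laurent series, the analogue of `PowerSeries.expand`. -/
def laurentExpand {R : Type*} [Semiring R] (m : ℕ) [NeZero m] :
    LaurentSeries R →+* LaurentSeries R :=
  embDomainRingHom (AddMonoidHom.mulLeft (m : ℤ))
    (mul_right_injective₀ (Nat.cast_ne_zero.2 (NeZero.ne m)))
    fun _ _ => mul_le_mul_iff_right₀ (Nat.cast_pos.2 (NeZero.pos m))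

variable {R : Type*} [Semiring R] {m : ℕ} {U : LaurentSeries R → LaurentSeries R}

theorem map_sum_of_coeff_eq (hU : ∀ f n, (U f).coeff n = f.coeff (m * n)) {ι : Type*}
    (s : Finset ι) (f : ι → LaurentSeries R) : U (∑ i ∈ s, f i) = ∑ i ∈ s, U (f i) := by
  ext n
  simp only [hU, coeff_sum]

variable [NeZero m]

theorem coeff_laurentExpand_mul (f : LaurentSeries R) (n : ℤ) :
    (laurentExpand m f).coeff (m * n) = f.coeff n :=
  embDomain_coeff

theorem coeff_laurentExpand_of_not_dvd (f : LaurentSeries R) {n : ℤ} (hn : ¬ (m : ℤ) ∣ n) :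
    (laurentExpand m f).coeff n = 0 :=
  embDomain_of_notMem_range fun ⟨k, hk⟩ => hn ⟨k, hk.symm⟩

theorem laurentExpand_ofPowerSeries {R : Type*} [CommRing R] (f : PowerSeries R) :
    laurentExpand m (ofPowerSeries ℤ R f) =
      ofPowerSeries ℤ R (PowerSeries.expand m (NeZero.ne m) f) := by
  ext n
  by_cases hn : (m : ℤ) ∣ n
  · obtain ⟨k, rfl⟩ := hn
    have hm : (0 : ℤ) < m := Nat.cast_pos.2 (NeZero.pos m)
    have hneg : m * k < 0 ↔ k < 0 := by simpa using mul_lt_mul_iff_right₀ hm (b := k) (c := 0)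
    simp only [coeff_laurentExpand_mul, PowerSeries.coeff_coe, Int.natAbs_mul, Int.natAbs_natCast,
      PowerSeries.coeff_expand_mul, hneg]
  · rw [coeff_laurentExpand_of_not_dvd _ hn, PowerSeries.coeff_coe,
      PowerSeries.coeff_expand_of_not_dvd _ _ _ (by rwa [← Int.natCast_dvd]), ite_self]

theorem map_laurentExpand_mul_of_coeff_eq (hU : ∀ f n, (U f).coeff n = f.coeff (m * n))
    (g f : LaurentSeries R) : U (laurentExpand m g * f) = g * U f := by
  have hm : (m : ℤ) ≠ 0 := Nat.cast_ne_zero.2 (NeZero.ne m)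
  ext n
  rw [hU, coeff_mul, coeff_mul]
  refine (Finset.sum_of_injOn (fun p : ℤ × ℤ => (m * p.1, m * p.2)) ?_ ?_ ?_ ?_).symm
  · exact (Prod.map_injective.2 ⟨mul_right_injective₀ hm, mul_right_injective₀ hm⟩).injOn
  · rintro ⟨a, b⟩ hab
    simpa [coeff_laurentExpand_mul, hU, ← mul_add, NeZero.ne m] using hab
  · rintro ⟨a, b⟩ hab hnot
    obtain ⟨-, -, hsum⟩ := Finset.mem_antidiagonal.1 hab
    by_cases ha : (m : ℤ) ∣ a
    · obtain ⟨a, rfl⟩ := ha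
      obtain ⟨b, rfl⟩ : (m : ℤ) ∣ b := (Int.dvd_add_right ⟨a, rfl⟩).1 ⟨n, hsum⟩
      refine absurd ⟨(a, b), ?_, rfl⟩ hnot
      simpa [coeff_laurentExpand_mul, hU, ← mul_add, NeZero.ne m] using hab
    · rw [coeff_laurentExpand_of_not_dvd _ ha, zero_mul]
  · rintro ⟨a, b⟩ -
    simp only [coeff_laurentExpand_mul, hU]

end LaurentExpand

section Main

open HahnSeries PowerSeries

theorem J_ne_zero {b : ℕ} (hb : b ≠ 0) : J b ≠ 0 := by
  intro h
  simpa [h] using constantCoeff_J hb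

theorem expand_J_seven : expand 7 (by decide) (J 7) = J 49 := by
  rw [J_eq_expand (b := 7) (by decide), J_eq_expand (b := 49) (by decide), ← expand_mul]

variable {T : LaurentSeries ℤ}

theorem laurentExpand_mul_J_seven
    (hT : T * ofPowerSeries ℤ ℤ (J 1 ^ 4) = ofPowerSeries ℤ ℤ (X * J 7 ^ 4)) :
    laurentExpand 7 T * ofPowerSeries ℤ ℤ (J 7 ^ 4) = ofPowerSeries ℤ ℤ (X ^ 7 * J 49 ^ 4) := by
  have hexpand := congrArg (laurentExpand 7) hT
  rwa [map_mul, laurentExpand_ofPowerSeries, laurentExpand_ofPowerSeries, map_mul,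
    map_pow (expand _ _), map_pow (expand _ _), expand_X, ← J_eq_expand, expand_J_seven] at hexpand

theorem modular_equation
    (hT : T * ofPowerSeries ℤ ℤ (J 1 ^ 4) = ofPowerSeries ℤ ℤ (X * J 7 ^ 4)) :
    T ^ 7 = ∑ l ∈ Finset.range 7, aPoly l (laurentExpand 7 T) * T ^ l := by
  have hsum := congrArg (ofPowerSeries ℤ ℤ) J_one_eq_dissection
  have hprod := congrArg (ofPowerSeries ℤ ℤ) J_one_dissection_prod
  have hcubic := congrArg (ofPowerSeries ℤ ℤ) J_one_dissection_cubic
  have hquartic := congrArg (ofPowerSeries ℤ ℤ) J_one_dissection_quartic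
  have hV := laurentExpand_mul_J_seven hT
  simp only [map_mul, map_add, map_sub, map_neg, map_pow, map_zero, map_ofNat]
    at hsum hprod hcubic hquartic hT hV
  have hne {f : ℤ⟦X⟧} : f ≠ 0 → ofPowerSeries ℤ ℤ f ≠ 0 :=
    (map_ne_zero_iff _ ofPowerSeries_injective).2
  exact pow_seven_eq_sum_aPoly_of_dissection (hne (J_ne_zero one_ne_zero)) (hne X_ne_zero)
    (hne (J_ne_zero (by decide))) rfl hsum hprod hcubic hquartic hT hV

theorem val_zpow_add_natCast {M : Type*} [Monoid M] (x : Mˣ) (j : ℤ) (n : ℕ) :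
    ((x ^ (j + n) : Mˣ) : M) = ↑(x ^ j) * (x : M) ^ n := by
  rw [zpow_add, zpow_natCast, Units.val_mul, Units.val_pow_eq_pow_val]

end Main

/-- for every Laurent series `u` with integer coefficients and every `j : ℤ`,
`U_7(u·t^j) = ∑_{l=0}^{6} a_l(t)·U_7(u·t^{j+l−7})`, where `t = q·J_7^4/J_1^4` (a unit of the
ring of Laurent series) and `U_7` is the operator sending `∑ f(n) qⁿ` to `∑ f(7n) qⁿ`. -/
theorem stmt5
    (T : (LaurentSeries ℤ)ˣ)
    (hT : (T : LaurentSeries ℤ) * HahnSeries.ofPowerSeries ℤ ℤ ((J 1) ^ 4)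
        = HahnSeries.ofPowerSeries ℤ ℤ (PowerSeries.X * (J 7) ^ 4))
    (U : LaurentSeries ℤ → LaurentSeries ℤ)
    (hU : ∀ (f : LaurentSeries ℤ) (n : ℤ), (U f).coeff n = f.coeff (7 * n))
    (u : LaurentSeries ℤ) (j : ℤ) :
    U (u * ↑(T ^ j)) =
      ∑ l ∈ Finset.range 7,
        aPoly l (T : LaurentSeries ℤ) * U (u * ↑(T ^ (j + (l : ℤ) - 7))) := by
  have hpow (l : ℕ) : (↑(T ^ (j + l - 7)) : LaurentSeries ℤ) = ↑(T ^ (j - 7)) * (T : _) ^ l := by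
    rw [← val_zpow_add_natCast, add_sub_right_comm]
  calc U (u * ↑(T ^ j)) = U (u * ↑(T ^ (j - 7)) * (T : LaurentSeries ℤ) ^ 7) := by
        rw [mul_assoc, ← hpow, Nat.cast_ofNat, add_sub_cancel_right]
    _ = U (∑ l ∈ Finset.range 7,
          laurentExpand 7 (aPoly l (T : LaurentSeries ℤ)) * (u * ↑(T ^ (j + l - 7)))) := by
        simp only [modular_equation hT, map_aPoly, hpow, Finset.mul_sum]
        congr! 2 with l
        ring
    _ = ∑ l ∈ Finset.range 7, aPoly l (T : LaurentSeries ℤ) * U (u * ↑(T ^ (j + l - 7))) := by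
        simp only [map_sum_of_coeff_eq hU, map_laurentExpand_mul_of_coeff_eq hU]
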